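/- Viewing the threshold k = k(λ0, λ1) as a function of λ0 with λ1 and all other parameters fixed, k(λ0, λ1) tends to k0 := (−δ1/(1−δ1)) · (β_s/β_b) as λ0 → ∞ (limit along the filter atTop). -/

import Mathlib

/-!
Divide numerator and denominator of `k` by `η γ₂`. As `λ₀ → ∞` the root `γ₂` grows like
`√(λ₀ / σ)`, the root `δ₃` like `-√(λ₀ / σ)`, and `η` like `λ₀`, while `a₀` and `a₁` stay bounded.
Hence only the terms `δ₁ δ₃ η`, `η δ₁ γ₂` of the numerator and `η (δ₁ δ₃ + γ₂)`, `η δ₁ γ₂`, `η δ₃`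
of the denominator survive. With `r = lim δ₃ / γ₂ = -1` the quotient tends to
`δ₁ (r - 1) / ((1 - δ₁) (1 - r))`, in which `r` cancels.
-/

open Asymptotics Bornology Filter
open scoped Topology

section ThresholdQuotient

variable {ι 𝕜 : Type*} [NormedField 𝕜]

/-- The factor of the threshold `k` in front of `β_s / β_b`, as a function of the quantities
`δ₁, η, a₀, a₁, δ₃, γ₂` it is built from. -/
def thresholdQuotient (δ₁ η a₀ a₁ δ₃ γ₂ : 𝕜) : 𝕜 :=
  (δ₁ * δ₃ * (1 + η) - (δ₃ + η * δ₁) * γ₂ - a₀ * (δ₁ - δ₃) * γ₂) /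
    ((1 + η) * (δ₁ * δ₃ + γ₂) - (δ₃ + η * δ₁) * γ₂ - (δ₁ + η * δ₃) -
      a₁ * (γ₂ - 1) * (δ₁ - δ₃))

lemma thresholdQuotient_eq_normalized (δ₁ a₀ a₁ δ₃ : 𝕜) {η γ₂ : 𝕜} (hη : η ≠ 0) (hγ₂ : γ₂ ≠ 0) :
    thresholdQuotient δ₁ η a₀ a₁ δ₃ γ₂ =
      (δ₁ * (δ₃ / γ₂) * (η⁻¹ + 1) - (δ₃ / η + δ₁) - a₀ * (δ₁ * η⁻¹ - δ₃ / η)) /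
        ((η⁻¹ + 1) * (δ₁ * (δ₃ / γ₂) + 1) - (δ₃ / η + δ₁) - (δ₁ * (η⁻¹ * γ₂⁻¹) + δ₃ / γ₂) -
          a₁ * (δ₁ * η⁻¹ - δ₃ / η) * (1 - γ₂⁻¹)) := by
  rw [thresholdQuotient, ← div_div_div_cancel_right₀ (mul_ne_zero hη hγ₂)]
  congr 1 <;> field_simp

theorem tendsto_thresholdQuotient {L : Filter ι} {δ₁ r : 𝕜} {η a₀ a₁ δ₃ γ₂ : ι → 𝕜}
    (hδ₁ : δ₁ ≠ 1) (hr : r ≠ 1) (hη : Tendsto η L (cobounded 𝕜))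
    (hγ₂ : Tendsto γ₂ L (cobounded 𝕜)) (hδ₃γ₂ : Tendsto (fun i ↦ δ₃ i / γ₂ i) L (𝓝 r))
    (hδ₃η : Tendsto (fun i ↦ δ₃ i / η i) L (𝓝 0))
    (ha₀ : IsBoundedUnder (· ≤ ·) L (norm ∘ a₀)) (ha₁ : IsBoundedUnder (· ≤ ·) L (norm ∘ a₁)) :
    Tendsto (fun i ↦ thresholdQuotient δ₁ (η i) (a₀ i) (a₁ i) (δ₃ i) (γ₂ i)) L
      (𝓝 (-δ₁ / (1 - δ₁))) := by
  have hη_inv : Tendsto (fun i ↦ (η i)⁻¹) L (𝓝 0) := tendsto_inv₀_cobounded.comp hη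
  have hγ₂_inv : Tendsto (fun i ↦ (γ₂ i)⁻¹) L (𝓝 0) := tendsto_inv₀_cobounded.comp hγ₂
  have hdiff : Tendsto (fun i ↦ δ₁ * (η i)⁻¹ - δ₃ i / η i) L (𝓝 0) := by
    simpa using (hη_inv.const_mul δ₁).sub hδ₃η
  have bounded_mul_diff {a : ι → 𝕜} (ha : IsBoundedUnder (· ≤ ·) L (norm ∘ a)) :
      Tendsto (fun i ↦ a i * (δ₁ * (η i)⁻¹ - δ₃ i / η i)) L (𝓝 0) :=
    isBoundedUnder_le_mul_tendsto_zero ha hdiff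
  have hnum := (((hδ₃γ₂.const_mul δ₁).mul (hη_inv.add_const 1)).sub (hδ₃η.add_const δ₁)).sub
    (bounded_mul_diff ha₀)
  have hden := ((((hη_inv.add_const 1).mul ((hδ₃γ₂.const_mul δ₁).add_const 1)).sub
    (hδ₃η.add_const δ₁)).sub (((hη_inv.mul hγ₂_inv).const_mul δ₁).add hδ₃γ₂)).sub
      ((bounded_mul_diff ha₁).mul (hγ₂_inv.const_sub 1))
  have hδ₁' : 1 - δ₁ ≠ 0 := sub_ne_zero.mpr hδ₁.symm
  have hr' : 1 - r ≠ 0 := sub_ne_zero.mpr hr.symm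
  have hden_lim : (0 + 1) * (δ₁ * r + 1) - (0 + δ₁) - (δ₁ * (0 * 0) + r) - 0 * (1 - 0) =
      (1 - δ₁) * (1 - r) := by ring
  have hlim : (δ₁ * r * (0 + 1) - (0 + δ₁) - 0) / ((1 - δ₁) * (1 - r)) = -δ₁ / (1 - δ₁) := by
    field_simp
    ring
  rw [hden_lim] at hden
  refine hlim ▸ (hnum.div hden (mul_ne_zero hδ₁' hr')).congr' ?_
  filter_upwards [hη.eventually_ne_cobounded 0, hγ₂.eventually_ne_cobounded 0] with i hηi hγ₂i
  exact (thresholdQuotient_eq_normalized δ₁ (a₀ i) (a₁ i) (δ₃ i) hηi hγ₂i).symm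

end ThresholdQuotient

section QuadraticRoots

/-- The smaller root of `x ^ 2 - m * x - q`, whose discriminant is `m ^ 2 + 4 * q`. The roots
`δ₁` and `δ₃` are of this form. If the discriminant is negative, the value is `m / 2`. -/
noncomputable def lowerRoot (m q : ℝ) : ℝ := (m - √(m ^ 2 + 4 * q)) / 2

/-- The larger root of `x ^ 2 - m * x - q`, whose discriminant is `m ^ 2 + 4 * q`. The root
`γ₂` is of this form. If the discriminant is negative, the value is `m / 2`. -/
noncomputable def upperRoot (m q : ℝ) : ℝ := (m + √(m ^ 2 + 4 * q)) / 2

lemma lowerRoot_neg (m : ℝ) {q : ℝ} (hq : 0 < q) : lowerRoot m q < 0 := by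
  have : m < √(m ^ 2 + 4 * q) := Real.lt_sqrt_of_sq_lt (by linarith)
  rw [lowerRoot]
  linarith

lemma lowerRoot_eq_neg_upperRoot (m q : ℝ) : lowerRoot m q = -upperRoot (-m) q := by
  rw [lowerRoot, upperRoot, neg_sq]
  ring

variable {ι : Type*} {L : Filter ι}

lemma isEquivalent_sqrt {u v : ι → ℝ} (h : u ~[L] v) :
    (fun i ↦ √(u i)) ~[L] fun i ↦ √(v i) := by
  obtain ⟨φ, hφ, huv⟩ := h.exists_eq_mul
  refine isEquivalent_iff_exists_eq_mul.mpr ⟨fun i ↦ √(φ i), by simpa using hφ.sqrt, ?_⟩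
  filter_upwards [huv, hφ.eventually_const_le one_pos] with i hi hφi
  simp only [hi, Pi.mul_apply, Real.sqrt_mul hφi]

lemma isEquivalent_upperRoot (m : ℝ) : upperRoot m ~[atTop] Real.sqrt := by
  have hdiscr : (fun q : ℝ ↦ m ^ 2 + 4 * q) ~[atTop] fun q ↦ 4 * q :=
    IsEquivalent.refl.const_add_of_norm_tendsto_atTop
      (tendsto_norm_atTop_atTop.comp (tendsto_id.const_mul_atTop four_pos))
  have hsqrt : (fun q ↦ √(4 * q)) = fun q ↦ 2 * √q := by
    funext q
    rw [Real.sqrt_mul zero_le_four, show (4 : ℝ) = 2 ^ 2 by norm_num, Real.sqrt_sq zero_le_two]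
  have hnum : (fun q ↦ m + √(m ^ 2 + 4 * q)) ~[atTop] fun q ↦ 2 * √q :=
    (hsqrt ▸ isEquivalent_sqrt hdiscr).const_add_of_norm_tendsto_atTop
      (tendsto_norm_atTop_atTop.comp (Real.tendsto_sqrt_atTop.const_mul_atTop two_pos))
  refine (hnum.div (IsEquivalent.refl (u := fun _ ↦ (2 : ℝ)))).congr_right ?_
  exact .of_forall fun q ↦ mul_div_cancel_left₀ _ two_ne_zero

lemma isEquivalent_lowerRoot (m : ℝ) : lowerRoot m ~[atTop] fun q ↦ -√q :=
  (isEquivalent_upperRoot (-m)).neg.congr_left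
    (.of_forall fun q ↦ (lowerRoot_eq_neg_upperRoot m q).symm)

lemma tendsto_upperRoot_atTop (m : ℝ) : Tendsto (upperRoot m) atTop atTop :=
  (isEquivalent_upperRoot m).symm.tendsto_atTop Real.tendsto_sqrt_atTop

lemma isLittleO_lowerRoot_id (m : ℝ) : lowerRoot m =o[atTop] (id : ℝ → ℝ) := by
  have hsqrt : Real.sqrt =o[atTop] (id : ℝ → ℝ) := by
    refine isLittleO_of_tendsto (fun x hx ↦ by simp_all) ?_
    simp only [id, Real.sqrt_div_self]
    exact tendsto_inv_atTop_zero.comp Real.tendsto_sqrt_atTop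
  exact (isEquivalent_lowerRoot m).trans_isLittleO hsqrt.neg_left

lemma tendsto_lowerRoot_div_upperRoot (m₁ m₂ : ℝ) {q₁ q₂ : ι → ℝ} (hq : q₁ ~[L] q₂)
    (hq₂ : Tendsto q₂ L atTop) :
    Tendsto (fun i ↦ lowerRoot m₁ (q₁ i) / upperRoot m₂ (q₂ i)) L (𝓝 (-1)) := by
  have hlower : (fun i ↦ lowerRoot m₁ (q₁ i)) ~[L] fun i ↦ -√(q₂ i) :=
    ((isEquivalent_lowerRoot m₁).comp_tendsto (hq.symm.tendsto_atTop hq₂)).trans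
      (isEquivalent_sqrt hq).neg
  have hupper : (fun i ↦ upperRoot m₂ (q₂ i)) ~[L] fun i ↦ √(q₂ i) :=
    (isEquivalent_upperRoot m₂).comp_tendsto hq₂
  refine (hlower.div hupper).symm.tendsto_nhds (tendsto_const_nhds.congr' ?_)
  filter_upwards [hq₂.eventually_gt_atTop 0] with i hi
  exact (neg_div_self (Real.sqrt_pos.mpr hi).ne').symm

end QuadraticRoots

lemma isEquivalent_add_const_atTop (c : ℝ) : (fun x ↦ x + c) ~[atTop] (id : ℝ → ℝ) :=
  IsEquivalent.refl.add_const_of_norm_tendsto_atTop tendsto_norm_atTop_atTop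

lemma tendsto_div_add_const_atTop (c : ℝ) : Tendsto (fun x ↦ x / (x + c)) atTop (𝓝 1) := by
  have hne : ∀ᶠ x : ℝ in atTop, x + c ≠ 0 :=
    (tendsto_atTop_add_const_right _ c tendsto_id).eventually_ne_atTop 0
  exact (isEquivalent_iff_tendsto_one hne).mp (isEquivalent_add_const_atTop c).symm

lemma tendsto_add_const_div_atTop {σ : ℝ} (hσ : 0 < σ) (p : ℝ) :
    Tendsto (fun l ↦ (l + p) / σ) atTop atTop :=
  (tendsto_atTop_add_const_right _ p tendsto_id).atTop_div_const hσ

lemma isLittleO_lowerRoot_add_const_div (m p : ℝ) {σ : ℝ} (hσ : 0 < σ) :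
    (fun l ↦ lowerRoot m ((l + p) / σ)) =o[atTop] fun l ↦ l := by
  have hlinear : (fun l ↦ (l + p) / σ) =O[atTop] fun l ↦ l := by
    simp only [div_eq_inv_mul]
    exact (isEquivalent_add_const_atTop p).isBigO.const_mul_left σ⁻¹
  exact ((isLittleO_lowerRoot_id m).comp_tendsto (tendsto_add_const_div_atTop hσ p)).trans_isBigO
    hlinear

theorem stmt_18_general (μ1 μ2 ρ σ lam1 m δ1 c : ℝ) (η a0 a1 δ3 γ2 kf : ℝ → ℝ)
    (hσ : 0 < σ) (hlam1 : lam1 ≠ 0) (hδ1 : δ1 ≠ 1)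
    (hη : ∀ l : ℝ, 0 < l → η l = l / lam1)
    (ha0 : ∀ l : ℝ, 0 < l → a0 l = l / (ρ + l - μ1))
    (ha1 : ∀ l : ℝ, 0 < l → a1 l = l / (ρ + l - μ2))
    (hδ3 : ∀ l : ℝ, 0 < l → δ3 l = (m - Real.sqrt (m ^ 2 + 4 * (ρ + l + lam1 - μ1) / σ)) / 2)
    (hγ2 : ∀ l : ℝ, 0 < l → γ2 l = (m + Real.sqrt (m ^ 2 + 4 * (ρ + l - μ1) / σ)) / 2)
    (hk : ∀ l : ℝ, 0 < l → kf l =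
      (δ1 * δ3 l * (1 + η l) - (δ3 l + η l * δ1) * γ2 l - a0 l * (δ1 - δ3 l) * γ2 l) /
        ((1 + η l) * (δ1 * δ3 l + γ2 l) - (δ3 l + η l * δ1) * γ2 l - (δ1 + η l * δ3 l) -
          a1 l * (γ2 l - 1) * (δ1 - δ3 l)) * c) :
    Tendsto kf atTop (𝓝 (-δ1 / (1 - δ1) * c)) := by
  let q (p l : ℝ) : ℝ := (l + p) / σ
  have hq (p : ℝ) : Tendsto (q p) atTop atTop := tendsto_add_const_div_atTop hσ p
  have hq_equiv (p p' : ℝ) : q p ~[atTop] q p' :=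
    ((isEquivalent_add_const_atTop p).trans (isEquivalent_add_const_atTop p').symm).div .refl
  have hη_lim : Tendsto (fun l ↦ l / lam1) atTop (cobounded ℝ) := by
    simp only [div_eq_mul_inv]
    exact (tendsto_mul_right_cobounded (inv_ne_zero hlam1)).comp
      IsOrderBornology.atTop_le_cobounded
  have hγ2_lim : Tendsto (fun l ↦ upperRoot m (q (ρ - μ1) l)) atTop (cobounded ℝ) :=
    ((tendsto_upperRoot_atTop m).comp (hq _)).mono_right IsOrderBornology.atTop_le_cobounded
  have hδ3_isLittleO : (fun l ↦ lowerRoot m (q (ρ + lam1 - μ1) l)) =o[atTop] fun l ↦ l / lam1 := by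
    simp only [div_eq_inv_mul _ lam1]
    exact (isLittleO_lowerRoot_add_const_div m _ hσ).const_mul_right (inv_ne_zero hlam1)
  have hlim := tendsto_thresholdQuotient hδ1 (by norm_num) hη_lim hγ2_lim
    (tendsto_lowerRoot_div_upperRoot m m (hq_equiv _ _) (hq _))
    hδ3_isLittleO.tendsto_div_nhds_zero
    (tendsto_div_add_const_atTop (ρ - μ1)).norm.isBoundedUnder_le
    (tendsto_div_add_const_atTop (ρ - μ2)).norm.isBoundedUnder_le
  refine (hlim.mul_const c).congr' ?_
  filter_upwards [eventually_gt_atTop 0] with l hl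
  have hδ3_root : δ3 l = lowerRoot m (q (ρ + lam1 - μ1) l) := by
    rw [hδ3 l hl, lowerRoot, mul_div_assoc, show ρ + l + lam1 - μ1 = l + (ρ + lam1 - μ1) by ring]
  have hγ2_root : γ2 l = upperRoot m (q (ρ - μ1) l) := by
    rw [hγ2 l hl, upperRoot, mul_div_assoc, add_comm ρ l, add_sub_assoc]
  rw [hk l hl, hη l hl, ha0 l hl, ha1 l hl, hδ3_root, hγ2_root, add_comm ρ l,
    add_sub_assoc l ρ μ1, add_sub_assoc l ρ μ2, thresholdQuotient]

theorem stmt_18 (μ1 μ2 ρ σ lam1 K βs βb m δ1 : ℝ)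
    (η a0 a1 δ3 γ2 kf : ℝ → ℝ)
    (hσ : 0 < σ) (hlam1 : 0 < lam1) (hμ1 : μ1 < ρ) (hμ2 : μ2 < ρ)
    (hK0 : 0 < K) (hK1 : K < 1) (hβs : βs = 1 - K) (hβb : βb = 1 + K)
    (hm : m = 1 + (μ1 - μ2) / σ)
    (hδ1 : δ1 = (m - Real.sqrt (m ^ 2 + 4 * (ρ - μ1) / σ)) / 2)
    (hη : ∀ l : ℝ, 0 < l → η l = l / lam1)
    (ha0 : ∀ l : ℝ, 0 < l → a0 l = l / (ρ + l - μ1))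
    (ha1 : ∀ l : ℝ, 0 < l → a1 l = l / (ρ + l - μ2))
    (hδ3 : ∀ l : ℝ, 0 < l → δ3 l = (m - Real.sqrt (m ^ 2 + 4 * (ρ + l + lam1 - μ1) / σ)) / 2)
    (hγ2 : ∀ l : ℝ, 0 < l → γ2 l = (m + Real.sqrt (m ^ 2 + 4 * (ρ + l - μ1) / σ)) / 2)
    (hk : ∀ l : ℝ, 0 < l → kf l =
      (δ1 * δ3 l * (1 + η l) - (δ3 l + η l * δ1) * γ2 l - a0 l * (δ1 - δ3 l) * γ2 l) /
        ((1 + η l) * (δ1 * δ3 l + γ2 l) - (δ3 l + η l * δ1) * γ2 l - (δ1 + η l * δ3 l) -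
          a1 l * (γ2 l - 1) * (δ1 - δ3 l)) *
        (βs / βb)) :
    Filter.Tendsto kf Filter.atTop (nhds (-δ1 / (1 - δ1) * (βs / βb))) := by
  have hδ1_neg : δ1 < 0 := by
    simpa only [hδ1, lowerRoot, mul_div_assoc] using
      lowerRoot_neg m (div_pos (sub_pos.mpr hμ1) hσ)
  exact stmt_18_general μ1 μ2 ρ σ lam1 m δ1 (βs / βb) η a0 a1 δ3 γ2 kf hσ hlam1.ne'
    (hδ1_neg.trans one_pos).ne hη ha0 ha1 hδ3 hγ2 hk
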